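/- If R ∈ S²_B(⋀²ℝⁿ) is an algebraic curvature operator of Ricci type (R_W = 0), then Q(R) = (1/(n−2)) Ric₀(R) ∧ Ric₀(R) + (2s(R)/(n(n−1))) Ric₀(R) ∧ id − (2/(n−2)²) (Ric₀(R)²)₀ ∧ id + (s(R)²/(n²(n−1)) + ‖Ric₀(R)‖²/(n(n−2))) 𝐈, where 𝐈 = id ∧ id and (Ric₀(R)²)₀ is the traceless part of Ric₀(R)². In particular, if R ∈ ⟨Ric₀⟩ (i.e. s(R) = 0 and R_W = 0), then Q(R) = (1/(n−2)) (Ric₀(R) ∧ Ric₀(R))_W − (4/(n−2)²) (Ric₀(R)²)₀ ∧ id + (‖Ric₀(R)‖²/(n(n−1))) 𝐈. -/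

import Mathlib

open scoped BigOperators
open Matrix Filter

noncomputable section

/-- `so n`: the Lie algebra of real skew-symmetric `n × n` matrices, as a submodule of
matrices.  It is the model for `⋀²ℝⁿ` under the identification `x ∧ y ↦ x yᵀ - y xᵀ`,
i.e. `(x ∧ y)(z) = ⟨y,z⟩x - ⟨x,z⟩y`. -/
def so (n : ℕ) : Submodule ℝ (Matrix (Fin n) (Fin n) ℝ) where
  carrier := {A | Aᵀ = -A}
  add_mem' := fun {a b} ha hb => by
    simp only [Set.mem_setOf_eq] at *
    rw [Matrix.transpose_add, ha, hb, neg_add]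
  zero_mem' := by simp
  smul_mem' := fun c {a} ha => by
    simp only [Set.mem_setOf_eq] at *
    rw [Matrix.transpose_smul, ha, smul_neg]

lemma mem_so {n : ℕ} {A : Matrix (Fin n) (Fin n) ℝ} : A ∈ so n ↔ Aᵀ = -A := Iff.rfl

lemma so_skew {n : ℕ} (X : so n) : (X.1)ᵀ = -X.1 := mem_so.mp X.2

lemma so_skew' {n : ℕ} (X : so n) (i j : Fin n) : X.1 j i = -X.1 i j := by
  have h := congrFun (congrFun (so_skew X) i) j
  simpa [Matrix.transpose_apply] using h

/-- The Lie bracket (matrix commutator) on `so n`. -/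
def brkt {n : ℕ} (X Y : so n) : so n :=
  ⟨X.1 * Y.1 - Y.1 * X.1, by
    rw [mem_so, Matrix.transpose_sub, Matrix.transpose_mul, Matrix.transpose_mul,
      so_skew X, so_skew Y]
    simp [neg_sub]⟩

/-- The inner product `⟨A, B⟩ = -(1/2) tr (A B)` on `so n ≅ ⋀²ℝⁿ`, for which
`{e_i ∧ e_j : i < j}` is orthonormal. -/
def ip {n : ℕ} (X Y : so n) : ℝ := -(1 / 2) * (X.1 * Y.1).trace

/-- `ip X` as a linear functional. -/
def ipL {n : ℕ} (X : so n) : so n →ₗ[ℝ] ℝ where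
  toFun Y := ip X Y
  map_add' Y Z := by
    simp [ip, Matrix.mul_add, Matrix.trace_add]
    ring
  map_smul' c Y := by
    simp [ip, Matrix.mul_smul, Matrix.trace_smul]
    ring

/-- The wedge `x ∧ y` of two vectors, as an element of `so n`. -/
def wedgeVec {n : ℕ} (x y : Fin n → ℝ) : so n :=
  ⟨Matrix.of fun i j => x i * y j - y i * x j, by
    rw [mem_so]
    ext i j
    simp [Matrix.transpose_apply]
    ring⟩

/-- Index set for the standard orthonormal basis `{e_i ∧ e_j : i < j}` of `so n`. -/
def pairs (n : ℕ) : Finset (Fin n × Fin n) := Finset.univ.filter (fun p => p.1 < p.2)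

/-- Standard basis vector of `ℝⁿ`. -/
def stdVec {n : ℕ} (i : Fin n) : Fin n → ℝ := Pi.single i 1

/-- The standard orthonormal basis element `e_i ∧ e_j` of `so n`. -/
def omegaB {n : ℕ} (p : Fin n × Fin n) : so n := wedgeVec (stdVec p.1) (stdVec p.2)

/-- Hamilton's sharp product `A # B` of self-adjoint endomorphisms of `⋀²ℝⁿ ≅ so n`:
`⟨(A # B)(φ), ψ⟩ = (1/2) Σ_{α,β} ⟨[A ω_α, B ω_β], φ⟩ ⟨[ω_α, ω_β], ψ⟩`
over the orthonormal basis `{ω_α} = {e_i ∧ e_j : i < j}`. -/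
def sharp {n : ℕ} (A B : Module.End ℝ (so n)) : Module.End ℝ (so n) :=
  (1 / 2 : ℝ) • ∑ p ∈ pairs n, ∑ q ∈ pairs n,
    (ipL (brkt (A (omegaB p)) (B (omegaB q)))).smulRight (brkt (omegaB p) (omegaB q))

/-- The bilinear map `Q(A,B) = (1/2)(AB + BA) + A # B`. -/
def Qbil {n : ℕ} (A B : Module.End ℝ (so n)) : Module.End ℝ (so n) :=
  (1 / 2 : ℝ) • (A * B + B * A) + sharp A B

/-- `Q(R) = R² + R # R`. -/
def Qop {n : ℕ} (R : Module.End ℝ (so n)) : Module.End ℝ (so n) := R * R + sharp R R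

/-- Self-adjointness of an endomorphism of `so n ≅ ⋀²ℝⁿ`. -/
def IsSelfAdjointCO {n : ℕ} (R : Module.End ℝ (so n)) : Prop :=
  ∀ X Y : so n, ip (R X) Y = ip X (R Y)

/-- The first Bianchi identity. -/
def SatBianchi {n : ℕ} (R : Module.End ℝ (so n)) : Prop :=
  ∀ x y z w : Fin n → ℝ,
    ip (R (wedgeVec x y)) (wedgeVec z w) + ip (R (wedgeVec y z)) (wedgeVec x w)
      + ip (R (wedgeVec z x)) (wedgeVec y w) = 0

/-- Algebraic curvature operators: self-adjoint endomorphisms of `⋀²ℝⁿ` satisfying the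
first Bianchi identity.  `IsACO R` says `R ∈ S²_B(⋀²ℝⁿ)`. -/
def IsACO {n : ℕ} (R : Module.End ℝ (so n)) : Prop := IsSelfAdjointCO R ∧ SatBianchi R

/-- The Ricci tensor of `R`, `Ric(R)_{ij} = Σ_k ⟨R(e_i ∧ e_k), e_j ∧ e_k⟩`. -/
def RicM {n : ℕ} (R : Module.End ℝ (so n)) : Matrix (Fin n) (Fin n) ℝ :=
  Matrix.of fun i j => ∑ k, ip (R (wedgeVec (stdVec i) (stdVec k))) (wedgeVec (stdVec j) (stdVec k))

/-- The scalar curvature `s(R) = tr Ric(R)`. -/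
def scal {n : ℕ} (R : Module.End ℝ (so n)) : ℝ := (RicM R).trace

/-- `‖Ric(R)‖² = tr (Ric(R)²)`. -/
def ricNormSq {n : ℕ} (R : Module.End ℝ (so n)) : ℝ := (RicM R * RicM R).trace

/-- The traceless Ricci tensor `Ric₀(R)`. -/
def Ric0M {n : ℕ} (R : Module.End ℝ (so n)) : Matrix (Fin n) (Fin n) ℝ :=
  RicM R - (scal R / n) • (1 : Matrix (Fin n) (Fin n) ℝ)

/-- `R` is Einstein if `Ric(R)` is a scalar multiple of the identity of `ℝⁿ`. -/
def IsEinstein {n : ℕ} (R : Module.End ℝ (so n)) : Prop :=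
  ∃ c : ℝ, RicM R = c • (1 : Matrix (Fin n) (Fin n) ℝ)

lemma wedgeEnd_key {n : ℕ} (A B : Matrix (Fin n) (Fin n) ℝ) (M : so n) :
    (A * M.1 * Bᵀ + B * M.1 * Aᵀ)ᵀ = -(A * M.1 * Bᵀ + B * M.1 * Aᵀ) := by
  have hM := so_skew M
  rw [Matrix.transpose_add, Matrix.transpose_mul, Matrix.transpose_mul,
    Matrix.transpose_mul, Matrix.transpose_mul, Matrix.transpose_transpose,
    Matrix.transpose_transpose, hM]
  simp only [Matrix.mul_neg, Matrix.neg_mul, Matrix.mul_assoc, neg_add]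
  abel

/-- The wedge `A ∧ B` of two endomorphisms of `ℝⁿ`, as an endomorphism of `⋀²ℝⁿ ≅ so n`:
`(A ∧ B)(v ∧ w) = (1/2)(Av ∧ Bw + Bv ∧ Aw)`, i.e. `M ↦ (1/2)(A M Bᵀ + B M Aᵀ)`. -/
def wedgeEnd {n : ℕ} (A B : Matrix (Fin n) (Fin n) ℝ) : Module.End ℝ (so n) where
  toFun M := ⟨(1 / 2 : ℝ) • (A * M.1 * Bᵀ + B * M.1 * Aᵀ), by
    rw [mem_so, Matrix.transpose_smul, wedgeEnd_key, smul_neg]⟩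
  map_add' M N := by
    apply Subtype.ext
    simp [Matrix.mul_add, Matrix.add_mul, smul_add]
    abel
  map_smul' c M := by
    apply Subtype.ext
    simp [Matrix.mul_smul, Matrix.smul_mul, smul_smul, mul_comm]

/-- Inner product `⟨A, B⟩ = tr(A ∘ B)` on endomorphisms of `⋀²ℝⁿ` (the Frobenius inner
product for self-adjoint operators). -/
def endIP {n : ℕ} (A B : Module.End ℝ (so n)) : ℝ := LinearMap.trace ℝ ↥(so n) (A * B)

/-- Norm of an endomorphism of `⋀²ℝⁿ` induced by `endIP`. -/
def endNorm {n : ℕ} (A : Module.End ℝ (so n)) : ℝ := Real.sqrt (endIP A A)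

/-- Huisken's trilinear form `tri(A,B,C) = tr((AB + BA + 2 A#B) ∘ C) = 2⟨Q(A,B), C⟩`. -/
def tri {n : ℕ} (A B C : Module.End ℝ (so n)) : ℝ :=
  LinearMap.trace ℝ ↥(so n) ((A * B + B * A + (2 : ℝ) • sharp A B) * C)

/-- The identity component `R_I = (s(R)/(n(n-1))) id ∧ id` of a curvature operator. -/
def compI {n : ℕ} (R : Module.End ℝ (so n)) : Module.End ℝ (so n) :=
  (scal R / ((n : ℝ) * ((n : ℝ) - 1))) • 1

/-- The traceless-Ricci component `R_{Ric₀} = (2/(n-2)) Ric₀(R) ∧ id`. -/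
def compRic0 {n : ℕ} (R : Module.End ℝ (so n)) : Module.End ℝ (so n) :=
  (2 / ((n : ℝ) - 2)) • wedgeEnd (Ric0M R) 1

/-- The Weyl component `R_W = R - R_I - R_{Ric₀}`. -/
def compW {n : ℕ} (R : Module.End ℝ (so n)) : Module.End ℝ (so n) := R - compI R - compRic0 R

/-- The derivative `DQ̃(R)` of the normalized vector field
`Q̃(R) = Q(R) - ‖Ric R‖² R` at `R`, applied to `A`:
`DQ̃(R)(A) = 2Q(R,A) - ‖Ric R‖² A - 2 tr(Ric R · Ric A) R`. -/
def DQt {n : ℕ} (R A : Module.End ℝ (so n)) : Module.End ℝ (so n) :=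
  (2 : ℝ) • Qbil R A - ricNormSq R • A - (2 * (RicM R * RicM A).trace) • R


/-!
Since `Q` is quadratic, everything reduces to one computation: `Q` on the operators `C ∧ id` with
`C` symmetric.  The composition `(C ∧ id)(D ∧ id) = ½ (C ∧ D + CD ∧ id)` is immediate.  For the
sharp product, self-adjointness rewrites `(A # B)(M)` as `½ ∑_ω [A [B ω, M], ω]`, a single sum over
an orthonormal basis; for `A = C ∧ id`, `B = D ∧ id` the inner expression is a combination of terms
`P ω S`, and `∑_ω ω P ω = Pᵀ - (tr P) id` evaluates each of them.  A curvature operator of Ricci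
type is `C ∧ id` with `C = s / (n (n - 1)) id + 2 / (n - 2) Ric₀`.
-/

section Basis

variable {n : ℕ}

lemma sum_pairs_eq_half_smul_sum {E : Type*} [AddCommMonoid E] [Module ℝ E]
    (f : Fin n × Fin n → E) (hswap : ∀ i j, f (i, j) = f (j, i)) (hdiag : ∀ i, f (i, i) = 0) :
    ∑ p ∈ pairs n, f p = (1 / 2 : ℝ) • ∑ i, ∑ j, f (i, j) := by
  have hlt : ∑ p ∈ pairs n, f p = ∑ i, ∑ j, if i < j then f (i, j) else 0 := by
    rw [pairs, Finset.sum_filter, Fintype.sum_prod_type]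
  have hgt : ∑ p ∈ pairs n, f p = ∑ i, ∑ j, if j < i then f (i, j) else 0 := by
    rw [hlt, Finset.sum_comm]
    simp only [hswap]
  have hsum : ∑ i, ∑ j, f (i, j) = ∑ p ∈ pairs n, f p + ∑ p ∈ pairs n, f p := by
    nth_rewrite 1 [hlt]
    rw [hgt]
    simp only [← Finset.sum_add_distrib]
    refine Finset.sum_congr rfl fun i _ => Finset.sum_congr rfl fun j _ => ?_
    rcases lt_trichotomy i j with h | rfl | h
    · simp [h, h.not_gt]
    · simp [hdiag]
    · simp [h, h.not_gt]
  rw [hsum]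
  module

lemma coe_omegaB (i j : Fin n) : (omegaB (i, j)).1 = single i j (1 : ℝ) - single j i 1 := by
  ext a b
  simp only [omegaB, wedgeVec, stdVec, of_apply, Matrix.sub_apply, single_apply, Pi.single_apply]
  grind

lemma omegaB_swap (i j : Fin n) : omegaB (j, i) = -omegaB (i, j) :=
  Subtype.ext (by simp [coe_omegaB])

lemma omegaB_diag (i : Fin n) : omegaB (i, i) = 0 :=
  Subtype.ext (by simp [coe_omegaB])

lemma ip_comm (X Y : so n) : ip X Y = ip Y X := by
  rw [ip, ip, trace_mul_comm]

lemma ip_omegaB (i j : Fin n) (X : so n) : ip (omegaB (i, j)) X = X.1 i j := by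
  rw [ip, coe_omegaB, Matrix.sub_mul, trace_sub, trace_single_mul, trace_single_mul,
    so_skew' X i j]
  ring

lemma sum_ip_omegaB_smul (X : so n) : ∑ p ∈ pairs n, ip (omegaB p) X • omegaB p = X := by
  rw [sum_pairs_eq_half_smul_sum]
  · apply Subtype.ext
    have hskew : ∑ i, ∑ j, single j i (X.1 i j) = -X.1 := by
      rw [Finset.sum_comm, ← so_skew X, matrix_eq_sum_single X.1ᵀ]
      rfl
    simp only [ip_omegaB, Submodule.coe_smul, Submodule.coe_sum, coe_omegaB, smul_sub,
      Finset.sum_sub_distrib, smul_single, smul_eq_mul, mul_one, hskew, ← matrix_eq_sum_single X.1]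
    module
  · intro i j
    rw [ip_omegaB, ip_omegaB, omegaB_swap i j, so_skew' X i j, smul_neg, neg_smul, neg_neg]
  · intro i
    rw [omegaB_diag, smul_zero]

lemma sum_omegaB_mul_mul_omegaB (P : Matrix (Fin n) (Fin n) ℝ) :
    ∑ p ∈ pairs n, (omegaB p).1 * P * (omegaB p).1 = Pᵀ - P.trace • 1 := by
  rw [sum_pairs_eq_half_smul_sum]
  · have htranspose : ∑ i, ∑ j, single i j (P j i) = Pᵀ := (matrix_eq_sum_single Pᵀ).symm
    have htrace : ∑ i : Fin n, ∑ j, single i i (P j j) = P.trace • 1 := by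
      have hsingle (i j : Fin n) : single i i (P j j) = P j j • single i i (1 : ℝ) := by
        rw [smul_single, smul_eq_mul, mul_one]
      simp only [hsingle, ← Finset.sum_smul, ← Finset.smul_sum, sum_single_one, trace, diag_apply]
    simp only [coe_omegaB, Matrix.sub_mul, Matrix.mul_sub, single_mul_mul_single, one_mul, mul_one,
      Finset.sum_sub_distrib]
    rw [Finset.sum_comm (f := fun i j => single j j (P i i)),
      Finset.sum_comm (f := fun i j => single j i (P i j)), htranspose, htrace]
    module
  · intro i j
    simp [omegaB_swap i j]
  · intro i
    simp [omegaB_diag]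

lemma sum_mul_omegaB_mul_commutator (P S : Matrix (Fin n) (Fin n) ℝ) :
    ∑ p ∈ pairs n, (P * (omegaB p).1 * S * (omegaB p).1 - (omegaB p).1 * (P * (omegaB p).1 * S)) =
      P * Sᵀ - Pᵀ * S - S.trace • P + P.trace • S := by
  calc
    _ = P * ∑ p ∈ pairs n, (omegaB p).1 * S * (omegaB p).1
        - (∑ p ∈ pairs n, (omegaB p).1 * P * (omegaB p).1) * S := by
      simp only [Finset.mul_sum, Finset.sum_mul, Finset.sum_sub_distrib, Matrix.mul_assoc]
    _ = _ := by
      simp only [sum_omegaB_mul_mul_omegaB, Matrix.mul_sub, Matrix.sub_mul, Matrix.mul_smul,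
        Matrix.smul_mul, Matrix.mul_one, Matrix.one_mul]
      abel

end Basis

section Sharp

variable {n : ℕ}

lemma coe_brkt (X Y : so n) : (brkt X Y).1 = X.1 * Y.1 - Y.1 * X.1 :=
  rfl

lemma ip_brkt_left (X Y Z : so n) : ip (brkt X Y) Z = ip X (brkt Y Z) := by
  simp only [ip, coe_brkt, Matrix.sub_mul, Matrix.mul_sub, trace_sub, Matrix.mul_assoc]
  rw [trace_mul_comm Y.1, Matrix.mul_assoc]

lemma brkt_sum_smul_left {ι : Type*} (s : Finset ι) (c : ι → ℝ) (X : ι → so n) (Y : so n) :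
    brkt (∑ i ∈ s, c i • X i) Y = ∑ i ∈ s, c i • brkt (X i) Y :=
  Subtype.ext (by simp [coe_brkt, Finset.sum_mul, Finset.mul_sum, smul_sub])

lemma sharp_apply {A : Module.End ℝ (so n)} (hA : IsSelfAdjointCO A) (B : Module.End ℝ (so n))
    (M : so n) :
    sharp A B M = (1 / 2 : ℝ) • ∑ q ∈ pairs n, brkt (A (brkt (B (omegaB q)) M)) (omegaB q) := by
  have hcoeff (p q : Fin n × Fin n) : ip (brkt (A (omegaB p)) (B (omegaB q))) M =
      ip (omegaB p) (A (brkt (B (omegaB q)) M)) := by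
    rw [ip_brkt_left, hA]
  have hq (q : Fin n × Fin n) : brkt (A (brkt (B (omegaB q)) M)) (omegaB q) =
      ∑ p ∈ pairs n, ip (brkt (A (omegaB p)) (B (omegaB q))) M • brkt (omegaB p) (omegaB q) := by
    simp only [hcoeff, ← brkt_sum_smul_left, sum_ip_omegaB_smul]
  simp only [hq, sharp, LinearMap.smul_apply, LinearMap.sum_apply, LinearMap.smulRight_apply]
  rw [Finset.sum_comm]
  rfl

end Sharp

section WedgeEnd

variable {n : ℕ}

lemma coe_wedgeEnd_apply (A B : Matrix (Fin n) (Fin n) ℝ) (M : so n) :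
    (wedgeEnd A B M).1 = (1 / 2 : ℝ) • (A * M.1 * Bᵀ + B * M.1 * Aᵀ) :=
  rfl

lemma wedgeEnd_comm (A B : Matrix (Fin n) (Fin n) ℝ) : wedgeEnd A B = wedgeEnd B A := by
  ext1 M
  exact Subtype.ext (by rw [coe_wedgeEnd_apply, coe_wedgeEnd_apply, add_comm])

lemma wedgeEnd_one_one : wedgeEnd (1 : Matrix (Fin n) (Fin n) ℝ) 1 = 1 := by
  ext1 M
  apply Subtype.ext
  simp only [coe_wedgeEnd_apply, transpose_one, Matrix.one_mul, Matrix.mul_one,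
    Module.End.one_apply]
  module

lemma wedgeEnd_add_left (A A' B : Matrix (Fin n) (Fin n) ℝ) :
    wedgeEnd (A + A') B = wedgeEnd A B + wedgeEnd A' B := by
  ext1 M
  apply Subtype.ext
  simp only [coe_wedgeEnd_apply, LinearMap.add_apply, Submodule.coe_add, transpose_add,
    Matrix.add_mul, Matrix.mul_add]
  module

lemma wedgeEnd_smul_left (c : ℝ) (A B : Matrix (Fin n) (Fin n) ℝ) :
    wedgeEnd (c • A) B = c • wedgeEnd A B := by
  ext1 M
  apply Subtype.ext
  simp only [coe_wedgeEnd_apply, LinearMap.smul_apply, Submodule.coe_smul, transpose_smul,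
    Matrix.smul_mul, Matrix.mul_smul]
  module

lemma wedgeEnd_sub_left (A A' B : Matrix (Fin n) (Fin n) ℝ) :
    wedgeEnd (A - A') B = wedgeEnd A B - wedgeEnd A' B := by
  ext1 M
  apply Subtype.ext
  simp only [coe_wedgeEnd_apply, LinearMap.sub_apply, Submodule.coe_sub, transpose_sub,
    Matrix.sub_mul, Matrix.mul_sub]
  module

lemma wedgeEnd_add_right (A B B' : Matrix (Fin n) (Fin n) ℝ) :
    wedgeEnd A (B + B') = wedgeEnd A B + wedgeEnd A B' := by
  simp only [wedgeEnd_comm A, wedgeEnd_add_left]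

lemma wedgeEnd_smul_right (c : ℝ) (A B : Matrix (Fin n) (Fin n) ℝ) :
    wedgeEnd A (c • B) = c • wedgeEnd A B := by
  simp only [wedgeEnd_comm A, wedgeEnd_smul_left]

lemma wedgeEnd_one_mul_wedgeEnd_one (C D : Matrix (Fin n) (Fin n) ℝ) :
    wedgeEnd C 1 * wedgeEnd D 1 = (1 / 2 : ℝ) • (wedgeEnd C D + wedgeEnd (C * D) 1) := by
  ext1 M
  apply Subtype.ext
  simp only [Module.End.mul_apply, LinearMap.smul_apply, LinearMap.add_apply, Submodule.coe_smul,
    Submodule.coe_add, coe_wedgeEnd_apply, transpose_one, transpose_mul, Matrix.mul_one,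
    Matrix.one_mul, Matrix.mul_smul, Matrix.smul_mul, Matrix.mul_add, Matrix.add_mul,
    Matrix.mul_assoc]
  module

lemma isSelfAdjointCO_wedgeEnd {A B : Matrix (Fin n) (Fin n) ℝ} (hA : A.IsSymm) (hB : B.IsSymm) :
    IsSelfAdjointCO (wedgeEnd A B) := by
  have htrace (C D : Matrix (Fin n) (Fin n) ℝ) (X Y : so n) :
      (C * (X.1 * (D * Y.1))).trace = (X.1 * (D * (Y.1 * C))).trace := by
    rw [trace_mul_comm]
    simp only [Matrix.mul_assoc]
  intro X Y
  simp only [ip, coe_wedgeEnd_apply, hA.eq, hB.eq, Matrix.smul_mul, Matrix.mul_smul,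
    Matrix.add_mul, Matrix.mul_add, Matrix.mul_assoc, trace_smul, trace_add, htrace]
  rw [add_comm]

lemma trace_symm_mul_skew {C : Matrix (Fin n) (Fin n) ℝ} (hC : C.IsSymm) (M : so n) :
    (C * M.1).trace = 0 := by
  have h : (C * M.1).trace = -(C * M.1).trace := by
    conv_lhs => rw [← trace_transpose, transpose_mul, so_skew, hC.eq, Matrix.neg_mul, trace_neg,
      trace_mul_comm]
  linarith

lemma coe_wedgeEnd_one_brkt_wedgeEnd_one {C D : Matrix (Fin n) (Fin n) ℝ} (hC : C.IsSymm)
    (hD : D.IsSymm) (X M : so n) :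
    (wedgeEnd C 1 (brkt (wedgeEnd D 1 X) M)).1 = (1 / 4 : ℝ) •
      (C * D * X.1 * M.1 + D * X.1 * (M.1 * C) + C * X.1 * (D * M.1) + 1 * X.1 * (D * M.1 * C)
        - C * M.1 * D * X.1 * 1 - M.1 * D * X.1 * C - C * M.1 * X.1 * D
        - M.1 * X.1 * (D * C)) := by
  simp only [coe_brkt, coe_wedgeEnd_apply, hC.eq, hD.eq, transpose_one, Matrix.mul_one,
    Matrix.one_mul, Matrix.mul_sub, Matrix.sub_mul, Matrix.mul_smul, Matrix.smul_mul,
    Matrix.mul_add, Matrix.add_mul, Matrix.mul_assoc]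
  module

lemma sum_brkt_wedgeEnd_one {C D : Matrix (Fin n) (Fin n) ℝ} (hC : C.IsSymm) (hD : D.IsSymm)
    (M : so n) :
    (∑ q ∈ pairs n, brkt (wedgeEnd C 1 (brkt (wedgeEnd D 1 (omegaB q)) M)) (omegaB q)).1 =
      (1 / 2 : ℝ) • (((n : ℝ) - 4) • (wedgeEnd C D M).1 + D.trace • (wedgeEnd C 1 M).1
        + C.trace • (wedgeEnd D 1 M).1 + (C * D).trace • M.1
        - (2 : ℝ) • (wedgeEnd (C * D + D * C) 1 M).1) := by
  let ψ (P S : Matrix (Fin n) (Fin n) ℝ) := P * Sᵀ - Pᵀ * S - S.trace • P + P.trace • S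
  have hψ (P S : Matrix (Fin n) (Fin n) ℝ) : ∑ p ∈ pairs n,
      (P * (omegaB p).1 * S * (omegaB p).1 - (omegaB p).1 * (P * (omegaB p).1 * S)) = ψ P S :=
    sum_mul_omegaB_mul_commutator P S
  calc
    _ = (1 / 4 : ℝ) • (ψ (C * D) M.1 + ψ D (M.1 * C) + ψ C (D * M.1) + ψ 1 (D * M.1 * C)
        - ψ (C * M.1 * D) 1 - ψ (M.1 * D) C - ψ (C * M.1) D - ψ M.1 (D * C)) := by
      simp only [← hψ, ← Finset.sum_add_distrib, ← Finset.sum_sub_distrib, Finset.smul_sum,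
        Submodule.coe_sum]
      refine Finset.sum_congr rfl fun p _ => ?_
      simp only [coe_brkt, coe_wedgeEnd_one_brkt_wedgeEnd_one hC hD, Matrix.smul_mul,
        Matrix.mul_smul, Matrix.add_mul, Matrix.mul_add, Matrix.sub_mul, Matrix.mul_sub]
      module
    _ = _ := by
      have htrace : (D * (M.1 * C)).trace = -(C * (M.1 * D)).trace := by
        rw [← trace_transpose]
        simp [hC.eq, hD.eq, so_skew, Matrix.mul_assoc]
      have htraceM : M.1.trace = 0 := by simpa using trace_symm_mul_skew isSymm_one M
      have htraceC : (M.1 * C).trace = 0 := by rw [trace_mul_comm, trace_symm_mul_skew hC]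
      have htraceD : (M.1 * D).trace = 0 := by rw [trace_mul_comm, trace_symm_mul_skew hD]
      simp only [ψ, coe_wedgeEnd_apply, transpose_mul, transpose_add, transpose_one, hC.eq, hD.eq,
        so_skew, trace_one, Fintype.card_fin, htrace, htraceM, htraceC, htraceD,
        trace_symm_mul_skew hC, trace_symm_mul_skew hD, trace_mul_comm D C, Matrix.mul_one,
        Matrix.one_mul, Matrix.mul_neg, Matrix.neg_mul, Matrix.mul_add, Matrix.add_mul,
        Matrix.mul_assoc]
      module

lemma sharp_wedgeEnd_one {C D : Matrix (Fin n) (Fin n) ℝ} (hC : C.IsSymm) (hD : D.IsSymm) :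
    sharp (wedgeEnd C 1) (wedgeEnd D 1) = (1 / 4 : ℝ) •
      (((n : ℝ) - 4) • wedgeEnd C D + D.trace • wedgeEnd C 1 + C.trace • wedgeEnd D 1
        + (C * D).trace • 1 - (2 : ℝ) • wedgeEnd (C * D + D * C) 1) := by
  ext1 M
  apply Subtype.ext
  rw [sharp_apply (isSelfAdjointCO_wedgeEnd hC isSymm_one), Submodule.coe_smul,
    sum_brkt_wedgeEnd_one hC hD]
  simp only [LinearMap.smul_apply, LinearMap.add_apply, LinearMap.sub_apply, Submodule.coe_smul,
    Submodule.coe_add, Submodule.coe_sub, Module.End.one_apply]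
  module

lemma Qop_wedgeEnd_one {C : Matrix (Fin n) (Fin n) ℝ} (hC : C.IsSymm) :
    Qop (wedgeEnd C 1) = (((n : ℝ) - 2) / 4) • wedgeEnd C C + (C.trace / 2) • wedgeEnd C 1
      - (1 / 2 : ℝ) • wedgeEnd (C * C) 1 + ((C * C).trace / 4) • 1 := by
  rw [Qop, wedgeEnd_one_mul_wedgeEnd_one, sharp_wedgeEnd_one hC hC, wedgeEnd_add_left]
  module

lemma Qop_smul_one_add_smul_wedgeEnd_one {A : Matrix (Fin n) (Fin n) ℝ} (hA : A.IsSymm)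
    (htr : A.trace = 0) (a b : ℝ) :
    Qop (a • 1 + b • wedgeEnd A 1) = (((n : ℝ) - 2) * b ^ 2 / 4) • wedgeEnd A A
      + (((n : ℝ) - 2) * a * b) • wedgeEnd A 1 - (b ^ 2 / 2) • wedgeEnd (A * A) 1
      + (((n : ℝ) - 1) * a ^ 2 + b ^ 2 * (A * A).trace / 4) • 1 := by
  have hC : (a • (1 : Matrix (Fin n) (Fin n) ℝ) + b • A).IsSymm :=
    (isSymm_one.smul a).add (hA.smul b)
  have hwedge : wedgeEnd (a • 1 + b • A) 1 = a • 1 + b • wedgeEnd A 1 := by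
    rw [wedgeEnd_add_left, wedgeEnd_smul_left, wedgeEnd_smul_left, wedgeEnd_one_one]
  rw [← hwedge, Qop_wedgeEnd_one hC]
  simp only [Matrix.add_mul, Matrix.mul_add, Matrix.smul_mul, Matrix.mul_smul, Matrix.one_mul,
    Matrix.mul_one, trace_add, trace_smul, trace_one, Fintype.card_fin, htr, smul_eq_mul,
    wedgeEnd_add_left, wedgeEnd_add_right, wedgeEnd_smul_left, wedgeEnd_smul_right,
    wedgeEnd_one_one, wedgeEnd_comm 1 A]
  module

end WedgeEnd

section Ricci

variable {n : ℕ}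

/-- The traceless part `A₀ = A - (tr A / n) id` of an endomorphism of `ℝⁿ`, so that `Ric₀(R)` is
definitionally `tracelessPart (RicM R)`. -/
def tracelessPart (A : Matrix (Fin n) (Fin n) ℝ) : Matrix (Fin n) (Fin n) ℝ :=
  A - (A.trace / (n : ℝ)) • 1

lemma trace_tracelessPart [NeZero n] (A : Matrix (Fin n) (Fin n) ℝ) :
    (tracelessPart A).trace = 0 := by
  simp [tracelessPart, NeZero.ne n]

lemma isSymm_tracelessPart {A : Matrix (Fin n) (Fin n) ℝ} (hA : A.IsSymm) :
    (tracelessPart A).IsSymm :=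
  hA.sub (isSymm_one.smul _)

lemma wedgeEnd_tracelessPart_left (A B : Matrix (Fin n) (Fin n) ℝ) :
    wedgeEnd (tracelessPart A) B = wedgeEnd A B - (A.trace / n) • wedgeEnd 1 B := by
  rw [tracelessPart, wedgeEnd_sub_left, wedgeEnd_smul_left]

lemma isSymm_RicM {R : Module.End ℝ (so n)} (hR : IsSelfAdjointCO R) : (RicM R).IsSymm := by
  ext i j
  simp only [RicM, transpose_apply, of_apply]
  exact Finset.sum_congr rfl fun k _ => by rw [hR, ip_comm]

lemma RicM_wedgeEnd (A B : Matrix (Fin n) (Fin n) ℝ) :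
    RicM (wedgeEnd A B) = (1 / 2 : ℝ) • (B.trace • A + A.trace • B - A * B - B * A)ᵀ := by
  ext i j
  have hterm (k : Fin n) :
      ip (wedgeEnd A B (wedgeVec (stdVec i) (stdVec k))) (wedgeVec (stdVec j) (stdVec k)) =
        1 / 2 * (A j i * B k k - A j k * B k i + (B j i * A k k - B j k * A k i)) := by
    rw [ip_comm]
    refine (ip_omegaB j k _).trans ?_
    change ((1 / 2 : ℝ) • (A * (omegaB (i, k)).1 * Bᵀ + B * (omegaB (i, k)).1 * Aᵀ)) j k = _
    simp [coe_omegaB, Matrix.mul_sub, Matrix.sub_mul, Matrix.mul_apply, single_apply, ite_and]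
  simp only [RicM, of_apply, hterm, ← Finset.mul_sum, Finset.sum_add_distrib,
    Finset.sum_sub_distrib]
  simp only [Matrix.smul_apply, transpose_apply, Matrix.sub_apply, Matrix.add_apply, mul_apply,
    trace, diag_apply, smul_eq_mul]
  ring

lemma compW_wedgeEnd_self {A : Matrix (Fin n) (Fin n) ℝ} (hA : A.IsSymm) (htr : A.trace = 0) :
    compW (wedgeEnd A A) = wedgeEnd A A
      + ((A * A).trace / ((n : ℝ) * ((n : ℝ) - 1))) • 1
      + (2 / ((n : ℝ) - 2)) • wedgeEnd (tracelessPart (A * A)) 1 := by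
  have hRic : RicM (wedgeEnd A A) = (-1 : ℝ) • (A * A) := by
    rw [RicM_wedgeEnd, htr, transpose_sub, transpose_sub, transpose_mul, hA.eq]
    simp only [zero_smul, add_zero, transpose_zero]
    module
  have hscal : scal (wedgeEnd A A) = -(A * A).trace := by
    rw [scal, hRic, trace_smul, neg_one_smul]
  have hRic0 : Ric0M (wedgeEnd A A) = (-1 : ℝ) • tracelessPart (A * A) := by
    rw [Ric0M, hRic, hscal, tracelessPart]
    module
  rw [compW, compI, compRic0, hscal, hRic0, wedgeEnd_smul_left]
  module

lemma compI_add_compRic0_add_compW (R : Module.End ℝ (so n)) :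
    compI R + compRic0 R + compW R = R := by
  rw [compW]
  module

end Ricci

/-- If `R ∈ S²_B(⋀²ℝⁿ)` is of Ricci type (`R_W = 0`) then
`Q(R) = (1/(n-2)) Ric₀(R) ∧ Ric₀(R) + (2s(R)/(n(n-1))) Ric₀(R) ∧ id
      - (2/(n-2)²) (Ric₀(R)²)₀ ∧ id + (s(R)²/(n²(n-1)) + ‖Ric₀(R)‖²/(n(n-2))) 𝐈`;
and if moreover `s(R) = 0` (so `R ∈ ⟨Ric₀⟩`), then
`Q(R) = (1/(n-2)) (Ric₀(R) ∧ Ric₀(R))_W - (4/(n-2)²) (Ric₀(R)²)₀ ∧ id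
      + (‖Ric₀(R)‖²/(n(n-1))) 𝐈`. -/
theorem stmt15 (n : ℕ) (hn : 3 ≤ n) (R : Module.End ℝ (so n)) (hACO : IsACO R)
    (hRicciType : compW R = 0) :
    Qop R =
      (1 / ((n : ℝ) - 2)) • wedgeEnd (Ric0M R) (Ric0M R)
      + (2 * scal R / ((n : ℝ) * ((n : ℝ) - 1))) • wedgeEnd (Ric0M R) 1
      - (2 / ((n : ℝ) - 2) ^ 2) •
          wedgeEnd (Ric0M R * Ric0M R
            - ((Ric0M R * Ric0M R).trace / (n : ℝ)) • (1 : Matrix (Fin n) (Fin n) ℝ)) 1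
      + ((scal R) ^ 2 / ((n : ℝ) ^ 2 * ((n : ℝ) - 1))
          + (Ric0M R * Ric0M R).trace / ((n : ℝ) * ((n : ℝ) - 2))) •
          (1 : Module.End ℝ (so n)) ∧
    (scal R = 0 →
      Qop R =
        (1 / ((n : ℝ) - 2)) • compW (wedgeEnd (Ric0M R) (Ric0M R))
        - (4 / ((n : ℝ) - 2) ^ 2) •
            wedgeEnd (Ric0M R * Ric0M R
              - ((Ric0M R * Ric0M R).trace / (n : ℝ)) • (1 : Matrix (Fin n) (Fin n) ℝ)) 1
        + ((Ric0M R * Ric0M R).trace / ((n : ℝ) * ((n : ℝ) - 1))) •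
            (1 : Module.End ℝ (so n))) := by
  have : NeZero n := ⟨by lia⟩
  have hn3 : (3 : ℝ) ≤ n := by exact_mod_cast hn
  have hn1 : (n : ℝ) - 1 ≠ 0 := by linarith
  have hn2 : (n : ℝ) - 2 ≠ 0 := by linarith
  have htr : (Ric0M R).trace = 0 := trace_tracelessPart (RicM R)
  have hsymm : (Ric0M R).IsSymm := isSymm_tracelessPart (isSymm_RicM hACO.1)
  have hQ := Qop_smul_one_add_smul_wedgeEnd_one hsymm htr
    (scal R / ((n : ℝ) * ((n : ℝ) - 1))) (2 / ((n : ℝ) - 2))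
  have hsq := wedgeEnd_tracelessPart_left (Ric0M R * Ric0M R) 1
  rw [tracelessPart, wedgeEnd_one_one] at hsq
  have hR : compI R + compRic0 R = R := by
    simpa only [hRicciType, add_zero] using compI_add_compRic0_add_compW R
  rw [← compI, ← compRic0, hR] at hQ
  refine ⟨?_, fun hs => ?_⟩
  · rw [hQ, hsq]
    match_scalars <;> field_simp <;> ring
  · rw [hQ, compW_wedgeEnd_self hsymm htr, tracelessPart, hsq, hs]
    match_scalars <;> field_simp <;> ring
end
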